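/- (Closed-form pairwise jump vector, equal stiffnesses.) Under the hypotheses of the closed-form pairwise jump statement, if additionally C_α = C_β = C, then the unique minimizer of the pairwise interface energy simplifies to a* = −Q_C⁻¹ · ((C[ε_α^B − ε_β^B]) n̂), where Q_C is the acoustic tensor of C, i.e. Q_C a = (C[(a ⊗ n̂)ˢʸᵐ]) n̂; in particular the optimal jump vector is independent of the total strain ε, of the strains ε_i of the other phase-fields, and of the phase-field values φ_α, φ_β. -/

import Mathlib

open Matrix BigOperators Finset

/-- The Frobenius inner product `⟨A, B⟩ = tr (A Bᵀ)`. -/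
noncomputable def frob {d : ℕ} (A B : Matrix (Fin d) (Fin d) ℝ) : ℝ := (A * Bᵀ).trace

/-- The symmetric part `Aˢʸᵐ = (A + Aᵀ)/2`. -/
noncomputable def symPart {d : ℕ} (A : Matrix (Fin d) (Fin d) ℝ) :
    Matrix (Fin d) (Fin d) ℝ := (1 / 2 : ℝ) • (A + Aᵀ)

/-- A stiffness tensor: self-adjoint for the Frobenius inner product, `C A = C(Aˢʸᵐ)`
symmetric for every `A`, and positive definite on nonzero symmetric matrices. -/
def IsStiffness {d : ℕ}
    (C : Matrix (Fin d) (Fin d) ℝ →ₗ[ℝ] Matrix (Fin d) (Fin d) ℝ) : Prop :=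
  (∀ A B, frob (C A) B = frob A (C B)) ∧
  (∀ A, C A = C (symPart A)) ∧
  (∀ A, (C A)ᵀ = C A) ∧
  (∀ S : Matrix (Fin d) (Fin d) ℝ, Sᵀ = S → S ≠ 0 → 0 < frob S (C S))

/-- The pairwise interface energy of the two Hooke pairwise phase-field energies,
evaluated at the rank-one connected pairwise strains
`ε_{αβ}(a) = s⁻¹[G − φ_β (a ⊗ n̂)ˢʸᵐ]`, `ε_{βα}(a) = s⁻¹[G + φ_α (a ⊗ n̂)ˢʸᵐ]`. -/
noncomputable def pairEnergy {d : ℕ}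
    (Cα Cβ : Matrix (Fin d) (Fin d) ℝ →ₗ[ℝ] Matrix (Fin d) (Fin d) ℝ)
    (εαB εβB : Matrix (Fin d) (Fin d) ℝ) (φα φβ : ℝ)
    (G : Matrix (Fin d) (Fin d) ℝ) (nh a : Fin d → ℝ) : ℝ :=
  (φα / (φα + φβ)) * ((1 / 2) *
      frob ((φα + φβ)⁻¹ • (G - φβ • symPart (vecMulVec a nh)) - εαB)
        (Cα ((φα + φβ)⁻¹ • (G - φβ • symPart (vecMulVec a nh)) - εαB)))
    + (φβ / (φα + φβ)) * ((1 / 2) *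
      frob ((φα + φβ)⁻¹ • (G + φα • symPart (vecMulVec a nh)) - εβB)
        (Cβ ((φα + φβ)⁻¹ • (G + φα • symPart (vecMulVec a nh)) - εβB)))

/-!
The jump in strain between the two phases is `-(a ⊗ n̂)ˢʸᵐ`, while their weighted mean strain does
not depend on `a`. For equal stiffnesses, the convex-combination identity
`s q(X) + t q(Y) = q(s X + t Y) + s t q(X - Y)` for the quadratic form `q(E) = ½⟨E, C E⟩` therefore
splits the interface energy into a part independent of `a` and a positive multiple of
`q((a ⊗ n̂)ˢʸᵐ + ε_α^B - ε_β^B)`. Total strain, remaining strains and phase fields enter only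
through that part and that multiple, so they do not move the minimizer. The remaining quadratic in
`a` has Hessian `Q_C` and is critical exactly when the traction balance
`Q_C a = -(C[ε_α^B - ε_β^B]) n̂` holds.
-/

lemma bilinForm_convexCombination {R M : Type*} [CommRing R] [AddCommGroup M] [Module R M]
    (B : LinearMap.BilinForm R M) {s t : R} (hst : s + t = 1) (x y : M) :
    s * B x x + t * B y y
      = B (s • x + t • y) (s • x + t • y) + s * t * B (x - y) (x - y) := by
  simp only [map_add, map_sub, map_smul, LinearMap.add_apply, LinearMap.sub_apply,
    LinearMap.smul_apply, smul_eq_mul]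
  linear_combination (-(s * B x x) - t * B y y) * hst

lemma bilinForm_add_self_of_apply_eq_zero {R M : Type*} [CommSemiring R] [AddCommMonoid M]
    [Module R M] {B : LinearMap.BilinForm R M} (hB : B.IsSymm) {x y : M} (hxy : B x y = 0) :
    B (x + y) (x + y) = B x x + B y y := by
  simp [hB.eq y x, hxy]

lemma surjective_of_dotProduct_pos {K ι : Type*} [Field K] [Preorder K] [Fintype ι]
    {f : (ι → K) →ₗ[K] (ι → K)} (hf : ∀ v, v ≠ 0 → 0 < v ⬝ᵥ f v) : Function.Surjective f := by
  refine LinearMap.injective_iff_surjective.mp <| (injective_iff_map_eq_zero f).mpr fun v hv => ?_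
  by_contra hv0
  simpa [hv] using hf v hv0

section Elasticity

variable {d : ℕ}

lemma frob_vecMulVec (a n : Fin d → ℝ) (S : Matrix (Fin d) (Fin d) ℝ) :
    frob (vecMulVec a n) S = a ⬝ᵥ S *ᵥ n := by
  rw [frob, vecMulVec_mul, trace_vecMulVec, vecMul_transpose]

lemma frob_comm (A B : Matrix (Fin d) (Fin d) ℝ) : frob A B = frob B A := by
  rw [frob, frob, ← trace_transpose, transpose_mul, transpose_transpose]

lemma symPart_transpose (A : Matrix (Fin d) (Fin d) ℝ) : (symPart A)ᵀ = symPart A := by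
  simp [symPart, add_comm]

lemma frob_symPart_of_isSymm (A : Matrix (Fin d) (Fin d) ℝ) {S : Matrix (Fin d) (Fin d) ℝ}
    (hS : S.IsSymm) : frob (symPart A) S = frob A S := by
  have htrace : (Aᵀ * S).trace = (A * S).trace := by
    rw [← trace_transpose, transpose_mul, transpose_transpose, hS.eq, trace_mul_comm]
  simp only [frob, symPart, hS.eq, smul_mul, Matrix.add_mul, trace_smul, trace_add, htrace,
    smul_eq_mul]
  ring

/-- The bilinear form `(E, F) ↦ ⟨E, C F⟩`, whose quadratic form is twice the Hooke energy. -/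
noncomputable def hookeForm (C : Matrix (Fin d) (Fin d) ℝ →ₗ[ℝ] Matrix (Fin d) (Fin d) ℝ) :
    LinearMap.BilinForm ℝ (Matrix (Fin d) (Fin d) ℝ) :=
  LinearMap.mk₂ ℝ (fun E F => frob E (C F))
    (by simp [frob, Matrix.add_mul]) (by simp [frob])
    (by simp [frob, Matrix.mul_add]) (by simp [frob])

/-- The symmetrized rank-one matrix `(a ⊗ n)ˢʸᵐ`, as a linear function of the jump vector `a`. -/
noncomputable def jumpStrain (n : Fin d → ℝ) : (Fin d → ℝ) →ₗ[ℝ] Matrix (Fin d) (Fin d) ℝ where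
  toFun a := symPart (vecMulVec a n)
  map_add' a b := by simp only [symPart, add_vecMulVec, transpose_add]; module
  map_smul' r a := by simp only [symPart, smul_vecMulVec, transpose_smul, RingHom.id_apply]; module

/-- The acoustic tensor `Q_C a = (C[(a ⊗ n)ˢʸᵐ]) n` of `C` in the direction `n`. -/
noncomputable def acousticTensor (C : Matrix (Fin d) (Fin d) ℝ →ₗ[ℝ] Matrix (Fin d) (Fin d) ℝ)
    (n : Fin d → ℝ) : (Fin d → ℝ) →ₗ[ℝ] (Fin d → ℝ) :=
  (mulVecBilin ℝ ℝ).flip n ∘ₗ C ∘ₗ jumpStrain n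

lemma dotProduct_jumpStrain_mulVec (n a : Fin d → ℝ) :
    a ⬝ᵥ jumpStrain n a *ᵥ n = ((n ⬝ᵥ n) * (a ⬝ᵥ a) + (a ⬝ᵥ n) ^ 2) / 2 := by
  have hmul : jumpStrain n a *ᵥ n = (1 / 2 : ℝ) • ((n ⬝ᵥ n) • a + (a ⬝ᵥ n) • n) := by
    simp [jumpStrain, symPart, smul_mulVec, add_mulVec, vecMulVec_mulVec, transpose_vecMulVec]
  simp only [hmul, dotProduct_smul, dotProduct_add, smul_eq_mul]
  ring

lemma jumpStrain_ne_zero {n a : Fin d → ℝ} (hn : n ≠ 0) (ha : a ≠ 0) : jumpStrain n a ≠ 0 := by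
  intro hzero
  have hna : 0 < (n ⬝ᵥ n) * (a ⬝ᵥ a) :=
    mul_pos (dotProduct_star_self_pos_iff.mpr hn) (dotProduct_star_self_pos_iff.mpr ha)
  have hquad := dotProduct_jumpStrain_mulVec n a
  rw [hzero, zero_mulVec, dotProduct_zero] at hquad
  linarith [sq_nonneg (a ⬝ᵥ n)]

variable {C : Matrix (Fin d) (Fin d) ℝ →ₗ[ℝ] Matrix (Fin d) (Fin d) ℝ}

lemma hookeForm_isSymm (hself : ∀ A B, frob (C A) B = frob A (C B)) : (hookeForm C).IsSymm :=
  ⟨fun A B => (hself A B).symm.trans (frob_comm (C A) B)⟩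

lemma hookeForm_jumpStrain_left (hsymm : ∀ A, (C A)ᵀ = C A) (n a : Fin d → ℝ)
    (E : Matrix (Fin d) (Fin d) ℝ) : hookeForm C (jumpStrain n a) E = a ⬝ᵥ C E *ᵥ n :=
  (frob_symPart_of_isSymm _ (hsymm E)).trans (frob_vecMulVec a n (C E))

lemma IsStiffness.dotProduct_acousticTensor_pos (hC : IsStiffness C) {n a : Fin d → ℝ}
    (hn : n ≠ 0) (ha : a ≠ 0) : 0 < a ⬝ᵥ acousticTensor C n a := by
  obtain ⟨-, -, hsymm, hpos⟩ := hC
  have henergy : 0 < hookeForm C (jumpStrain n a) (jumpStrain n a) :=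
    hpos _ (symPart_transpose _) (jumpStrain_ne_zero hn ha)
  rwa [hookeForm_jumpStrain_left hsymm] at henergy

lemma hookeForm_jumpStrain_add_of_acousticTensor_eq
    (hself : ∀ A B, frob (C A) B = frob A (C B)) (hsymm : ∀ A, (C A)ᵀ = C A)
    {n a : Fin d → ℝ} {D : Matrix (Fin d) (Fin d) ℝ}
    (ha : acousticTensor C n a = -(C D *ᵥ n)) (b : Fin d → ℝ) :
    hookeForm C (jumpStrain n b + D) (jumpStrain n b + D)
      = hookeForm C (jumpStrain n a + D) (jumpStrain n a + D)
        + (b - a) ⬝ᵥ acousticTensor C n (b - a) := by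
  have htraction : C (jumpStrain n a + D) *ᵥ n = 0 := by
    rw [map_add, add_mulVec]
    exact eq_neg_iff_add_eq_zero.mp ha
  have hortho : hookeForm C (jumpStrain n (b - a)) (jumpStrain n a + D) = 0 := by
    rw [hookeForm_jumpStrain_left hsymm, htraction, dotProduct_zero]
  have hsplit : jumpStrain n b + D = jumpStrain n (b - a) + (jumpStrain n a + D) := by
    rw [map_sub]; abel
  rw [hsplit, bilinForm_add_self_of_apply_eq_zero (hookeForm_isSymm hself) hortho, add_comm,
    hookeForm_jumpStrain_left hsymm n (b - a) (jumpStrain n (b - a))]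
  rfl

lemma pairEnergy_eq_mean_add_jump (P R G : Matrix (Fin d) (Fin d) ℝ) {x y : ℝ} (hxy : x + y ≠ 0)
    (n a : Fin d → ℝ) :
    pairEnergy C C P R x y G n a
      = 1 / 2 * hookeForm C ((x + y)⁻¹ • (G - x • P - y • R)) ((x + y)⁻¹ • (G - x • P - y • R))
        + 1 / 2 * (x / (x + y) * (y / (x + y)))
          * hookeForm C (jumpStrain n a + (P - R)) (jumpStrain n a + (P - R)) := by
  set X := (x + y)⁻¹ • (G - y • jumpStrain n a) - P with hX
  set Y := (x + y)⁻¹ • (G + x • jumpStrain n a) - R with hY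
  have hweights : x / (x + y) + y / (x + y) = 1 := by rw [← add_div, div_self hxy]
  have hmean : (x / (x + y)) • X + (y / (x + y)) • Y = (x + y)⁻¹ • (G - x • P - y • R) := by
    rw [hX, hY]
    match_scalars <;> field_simp
    all_goals ring
  have hjump : X - Y = -(jumpStrain n a + (P - R)) := by
    rw [hX, hY]
    match_scalars <;> field_simp <;> ring
  have hconvex := bilinForm_convexCombination (hookeForm C) hweights X Y
  rw [hmean, hjump, LinearMap.BilinForm.neg_left, map_neg, neg_neg] at hconvex
  calc pairEnergy C C P R x y G n a
      = x / (x + y) * (1 / 2 * hookeForm C X X) + y / (x + y) * (1 / 2 * hookeForm C Y Y) := rfl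
    _ = _ := by linear_combination 1 / 2 * hconvex

lemma pairEnergy_eq_add_of_acousticTensor_eq
    (hself : ∀ A B, frob (C A) B = frob A (C B)) (hsymm : ∀ A, (C A)ᵀ = C A)
    {P R : Matrix (Fin d) (Fin d) ℝ} {n a : Fin d → ℝ}
    (ha : acousticTensor C n a = -(C (P - R) *ᵥ n)) {x y : ℝ} (hxy : x + y ≠ 0)
    (G : Matrix (Fin d) (Fin d) ℝ) (b : Fin d → ℝ) :
    pairEnergy C C P R x y G n b = pairEnergy C C P R x y G n a
      + 1 / 2 * (x / (x + y) * (y / (x + y))) * ((b - a) ⬝ᵥ acousticTensor C n (b - a)) := by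
  rw [pairEnergy_eq_mean_add_jump P R G hxy n b, pairEnergy_eq_mean_add_jump P R G hxy n a,
    hookeForm_jumpStrain_add_of_acousticTensor_eq hself hsymm ha b]
  ring

lemma pairEnergy_lt_of_acousticTensor_eq
    (hself : ∀ A B, frob (C A) B = frob A (C B)) (hsymm : ∀ A, (C A)ᵀ = C A)
    {P R : Matrix (Fin d) (Fin d) ℝ} {n a : Fin d → ℝ}
    (hpos : ∀ v, v ≠ 0 → 0 < v ⬝ᵥ acousticTensor C n v)
    (ha : acousticTensor C n a = -(C (P - R) *ᵥ n)) {x y : ℝ} (hx : 0 < x) (hy : 0 < y)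
    (G : Matrix (Fin d) (Fin d) ℝ) {b : Fin d → ℝ} (hb : b ≠ a) :
    pairEnergy C C P R x y G n a < pairEnergy C C P R x y G n b := by
  rw [pairEnergy_eq_add_of_acousticTensor_eq hself hsymm ha (add_pos hx hy).ne' G b]
  have hquad := hpos (b - a) (sub_ne_zero.mpr hb)
  exact lt_add_of_pos_right _ (by positivity)

/-- `hpos` is the Legendre–Hadamard (strong ellipticity) condition in the direction `n`. -/
theorem closed_form_pairwise_jump_vector_equal_stiffness_general
    (hself : ∀ A B, frob (C A) B = frob A (C B)) (hsymm : ∀ A, (C A)ᵀ = C A) {n : Fin d → ℝ}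
    (hpos : ∀ v, v ≠ 0 → 0 < v ⬝ᵥ acousticTensor C n v) (P R : Matrix (Fin d) (Fin d) ℝ) :
    ∃ astar, acousticTensor C n astar = -(C (P - R) *ᵥ n) ∧
      ∀ x y : ℝ, 0 < x → 0 < y → ∀ G : Matrix (Fin d) (Fin d) ℝ,
        (∀ b, pairEnergy C C P R x y G n astar ≤ pairEnergy C C P R x y G n b) ∧
        ∀ a, (∀ b, pairEnergy C C P R x y G n a ≤ pairEnergy C C P R x y G n b) → a = astar := by
  obtain ⟨astar, hastar⟩ := surjective_of_dotProduct_pos hpos (-(C (P - R) *ᵥ n))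
  refine ⟨astar, hastar, fun x y hx hy G => ?_⟩
  have hlt {b : Fin d → ℝ} (hb : b ≠ astar) :=
    pairEnergy_lt_of_acousticTensor_eq hself hsymm hpos hastar hx hy G hb
  constructor
  · intro b
    obtain rfl | hb := eq_or_ne b astar
    · exact le_rfl
    · exact (hlt hb).le
  · intro a hmin
    by_contra ha
    exact (hlt ha).not_ge (hmin astar)

end Elasticity

/-- closed-form pairwise jump vector, equal stiffnesses: if
`C_α = C_β = C`, the unique minimizer of the pairwise interface energy is
`a* = −Q_C⁻¹ ((C[ε_α^B − ε_β^B]) n̂)` with `Q_C` the acoustic tensor of `C`; in particular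
the same vector `a*` is the unique global minimizer for every admissible total strain `ε`,
strains `ε_i` of the other phase-fields, and phase-field values `φ`. -/
theorem closed_form_pairwise_jump_vector_equal_stiffness {d : ℕ}
    (C : Matrix (Fin d) (Fin d) ℝ →ₗ[ℝ] Matrix (Fin d) (Fin d) ℝ) (hC : IsStiffness C)
    (εαB εβB : Matrix (Fin d) (Fin d) ℝ) (hεαB : εαBᵀ = εαB) (hεβB : εβBᵀ = εβB)
    (nh : Fin d → ℝ) (hnh : nh ⬝ᵥ nh = 1) :
    ∃ astar : Fin d → ℝ,
      (C (symPart (vecMulVec astar nh))).mulVec nh = -((C (εαB - εβB)).mulVec nh)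
        ∧ ∀ (n : ℕ), 2 ≤ n → ∀ (α β : Fin n), α ≠ β →
            ∀ (φ : Fin n → ℝ), (∀ i, 0 ≤ φ i) → (∑ i, φ i) = 1 →
              0 < φ α → 0 < φ β →
            ∀ (ε : Matrix (Fin d) (Fin d) ℝ), εᵀ = ε →
            ∀ (εo : Fin n → Matrix (Fin d) (Fin d) ℝ), (∀ i, (εo i)ᵀ = εo i) →
              (∀ b, pairEnergy C C εαB εβB (φ α) (φ β)
                    (ε - ∑ i ∈ univ \ {α, β}, φ i • εo i) nh astar
                  ≤ pairEnergy C C εαB εβB (φ α) (φ β)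
                    (ε - ∑ i ∈ univ \ {α, β}, φ i • εo i) nh b)
              ∧ (∀ a, (∀ b, pairEnergy C C εαB εβB (φ α) (φ β)
                      (ε - ∑ i ∈ univ \ {α, β}, φ i • εo i) nh a
                    ≤ pairEnergy C C εαB εβB (φ α) (φ β)
                      (ε - ∑ i ∈ univ \ {α, β}, φ i • εo i) nh b) → a = astar) := by
  have hn : nh ≠ 0 := by rintro rfl; simp at hnh
  obtain ⟨astar, hastar, hmin⟩ := closed_form_pairwise_jump_vector_equal_stiffness_general
    hC.1 hC.2.2.1 (fun _ => hC.dotProduct_acousticTensor_pos hn) εαB εβB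
  exact ⟨astar, hastar, fun _ _ _ _ _ _ _ _ hα hβ _ _ _ _ => hmin _ _ hα hβ _⟩
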